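/- Let S, L, c, d be nonnegative real numbers such that S - L ≤ c·√S + d. Then √S ≤ √L + c + √d. -/

import Mathlib

/-- Improvement for small losses: if `S - L ≤ c·√S + d` with all quantities
nonnegative, then `√S ≤ √L + c + √d`. -/
theorem sqrt_le_sqrt_add_of_sub_le (S L c d : ℝ)
    (hS : 0 ≤ S) (hL : 0 ≤ L) (hc : 0 ≤ c) (hd : 0 ≤ d)
    (h : S - L ≤ c * Real.sqrt S + d) :
    Real.sqrt S ≤ Real.sqrt L + c + Real.sqrt d := by
  by_contra hlt
  have hlt' := not_le.mp hlt
  have ha := Real.sqrt_nonneg L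
  have hb := Real.sqrt_nonneg d
  have h1 := Real.mul_self_sqrt hS
  have h2 := Real.mul_self_sqrt hL
  have h3 := Real.mul_self_sqrt hd
  generalize Real.sqrt S = x at *
  generalize Real.sqrt L = a at *
  generalize Real.sqrt d = b at *
  have h4 : (a + b) * (a + b) < x * (x - c) :=
    mul_lt_mul'' (by linarith) (by linarith) (by linarith) (by linarith)
  have h5 : 0 ≤ a * b := mul_nonneg ha hb
  nlinarith
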